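/- arXiv:1303.3754 — 2 statements merged into one kernel-verified Lean document; each statement's English description precedes it below -/
import Mathlib

section
/- For every T ≥ 1, Σ_{t=1}^{T} x_tᵀ D_t^{-1} x_t ≤ ln det((1/b)·D_T) + c^{-1}·Σ_{t=1}^{T} Tr(D_{t-1}). -/
open Matrix Finset

/-- `D₀ = (bc/(c−b)) I`, `D_t = (D_{t-1}⁻¹ + c⁻¹ I)⁻¹ + x_t x_tᵀ` for `t ≥ 1`. -/
noncomputable def Dmat (d : ℕ) (b c : ℝ) (x : ℕ → Fin d → ℝ) :
    ℕ → Matrix (Fin d) (Fin d) ℝ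
  | 0 => (b * c / (c - b)) • 1
  | (t + 1) => ((Dmat d b c x t)⁻¹ + c⁻¹ • 1)⁻¹ + vecMulVec (x (t + 1)) (x (t + 1))

lemma aux_log_det {d : ℕ} {M : Matrix (Fin d) (Fin d) ℝ} (hM : M.PosDef) :
    Real.log M.det ≤ M.trace - d := by
  rw [hM.1.det_eq_prod_eigenvalues, hM.1.trace_eq_sum_eigenvalues]
  simp only [RCLike.ofReal_real_eq_id, id]
  rw [Real.log_prod (fun i _ => (hM.eigenvalues_pos i).ne')]
  calc _ ≤ ∑ i, (hM.1.eigenvalues i - 1) :=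
        Finset.sum_le_sum fun i _ => Real.log_le_sub_one_of_pos (hM.eigenvalues_pos i)
    _ = _ := by simp

lemma aux_det {d : ℕ} {M : Matrix (Fin d) (Fin d) ℝ} (hM : IsUnit M.det) (x : Fin d → ℝ) :
    (M - vecMulVec x x).det = M.det * (1 - x ⬝ᵥ (M⁻¹ *ᵥ x)) := by
  have h : M - vecMulVec x x =
      M * (1 + replicateCol Unit (-(M⁻¹ *ᵥ x)) * replicateRow Unit x) := by
    rw [Matrix.mul_add, Matrix.mul_one, ← vecMulVec_eq, mul_vecMulVec, mulVec_neg, mulVec_mulVec,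
      mul_nonsing_inv _ hM, one_mulVec, neg_vecMulVec, sub_eq_add_neg]
  rw [h, det_mul, det_one_add_replicateCol_mul_replicateRow, dotProduct_neg, sub_eq_add_neg]

lemma aux_posDef {d : ℕ} {c : ℝ} (hc : 0 < c) {M : Matrix (Fin d) (Fin d) ℝ} (hM : M.PosDef) :
    (M⁻¹ + c⁻¹ • (1 : Matrix (Fin d) (Fin d) ℝ))⁻¹.PosDef :=
  (hM.inv.add (PosDef.one.smul (inv_pos.2 hc))).inv

lemma aux_posDef' {d : ℕ} {A : Matrix (Fin d) (Fin d) ℝ} (hA : A.PosDef) (x : Fin d → ℝ) :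
    (A + vecMulVec x x).PosDef := by
  have := posSemidef_vecMulVec_self_star x
  rw [star_trivial] at this
  exact hA.add_posSemidef this

lemma aux_step {d : ℕ} {c : ℝ} (hc : 0 < c) {M : Matrix (Fin d) (Fin d) ℝ} (hM : M.PosDef)
    (x : Fin d → ℝ) {N : Matrix (Fin d) (Fin d) ℝ}
    (hN : N = (M⁻¹ + c⁻¹ • (1 : Matrix (Fin d) (Fin d) ℝ))⁻¹ + vecMulVec x x) :
    x ⬝ᵥ (N⁻¹ *ᵥ x) ≤ Real.log N.det - Real.log M.det + c⁻¹ * M.trace := by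
  have hA := aux_posDef hc hM
  have hB : (M⁻¹ + c⁻¹ • (1 : Matrix (Fin d) (Fin d) ℝ)).PosDef :=
    hM.inv.add (PosDef.one.smul (inv_pos.2 hc))
  have hNp : N.PosDef := hN ▸ aux_posDef' hA x
  have h1 := aux_det hNp.det_pos.ne'.isUnit x
  rw [hN, add_sub_cancel_right, ← hN] at h1
  have hq : 0 < 1 - x ⬝ᵥ (N⁻¹ *ᵥ x) := by
    have := hA.det_pos
    rw [h1] at this
    exact (mul_pos_iff_of_pos_left hNp.det_pos).1 this
  have h2 := congrArg Real.log h1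
  rw [Real.log_mul hNp.det_pos.ne' hq.ne'] at h2
  have h3 := Real.log_le_sub_one_of_pos hq
  have hE : (1 + c⁻¹ • M).PosDef := PosDef.one.add (hM.smul (inv_pos.2 hc))
  have h4 : (1 + c⁻¹ • M) = (M⁻¹ + c⁻¹ • (1 : Matrix (Fin d) (Fin d) ℝ)) * M := by
    rw [Matrix.add_mul, nonsing_inv_mul _ hM.det_pos.ne'.isUnit, Matrix.smul_mul, Matrix.one_mul]
  have h5 := aux_log_det hE
  have h6 : (1 + c⁻¹ • M).trace = d + c⁻¹ * M.trace := by
    simp [trace_add, trace_smul]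
  rw [h6, h4, det_mul, Real.log_mul hB.det_pos.ne' hM.det_pos.ne'] at h5
  rw [det_nonsing_inv, Ring.inverse_eq_inv', Real.log_inv] at h2
  linarith

lemma aux_Dmat (d : ℕ) (b c : ℝ) (hb : 0 < b) (hbc : b < c) (x : ℕ → Fin d → ℝ) (t : ℕ) :
    (Dmat d b c x t).PosDef := by
  induction t with
  | zero =>
    exact PosDef.one.smul (div_pos (mul_pos hb (hb.trans hbc)) (sub_pos.2 hbc))
  | succ t ih => exact aux_posDef' (aux_posDef (hb.trans hbc) ih) _

lemma aux_main (d : ℕ) (b c : ℝ)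
    (hb : 0 < b) (hbc : b < c) (x : ℕ → Fin d → ℝ) (T : ℕ) :
    ∑ t ∈ Finset.range T, x (t + 1) ⬝ᵥ ((Dmat d b c x (t + 1))⁻¹ *ᵥ x (t + 1)) ≤
      Real.log ((b⁻¹ • Dmat d b c x T).det)
        + c⁻¹ * ∑ t ∈ Finset.range T, (Dmat d b c x t).trace := by
  induction T with
  | zero =>
    simp only [Finset.range_zero, Finset.sum_empty, mul_zero, add_zero, Dmat, smul_smul,
      det_smul, det_one, mul_one]
    apply Real.log_nonneg
    apply one_le_pow₀
    have : b⁻¹ * (b * c / (c - b)) = c / (c - b) := by field_simp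
    rw [this, one_le_div (sub_pos.2 hbc)]
    linarith
  | succ T ih =>
    have hs := aux_step (hb.trans hbc) (aux_Dmat d b c hb hbc x T) (x (T + 1))
      (N := Dmat d b c x (T + 1)) rfl
    have hp : (b⁻¹ ^ d : ℝ) ≠ 0 := by positivity
    rw [det_smul, Fintype.card_fin,
      Real.log_mul hp (aux_Dmat d b c hb hbc x _).det_pos.ne'] at ih ⊢
    rw [Finset.sum_range_succ, Finset.sum_range_succ, mul_add]
    linarith

theorem laser_quadratic_sum_bound (d : ℕ) (hd : 1 ≤ d) (b c : ℝ)
    (hb : 0 < b) (hbc : b < c) (x : ℕ → Fin d → ℝ) (T : ℕ) (hT : 1 ≤ T) :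
    ∑ t ∈ Finset.range T, x (t + 1) ⬝ᵥ ((Dmat d b c x (t + 1))⁻¹ *ᵥ x (t + 1)) ≤
      Real.log ((b⁻¹ • Dmat d b c x T).det)
        + c⁻¹ * ∑ t ∈ Finset.range T, (Dmat d b c x t).trace := by
  exact aux_main d b c hb hbc x T
end

section
/- Assume ‖x_t‖² ≤ X² and |y_t| ≤ Y for all t, with X > 0. Fix T ≥ 1, a comparator sequence u_1, …, u_T ∈ ℝ^d with total drift V = Σ_{t=1}^{T-1} ‖u_{t+1} − u_t‖² > 0, and 0 < ε < 1. Set c = (√2·T·Y²·d·X / V)^{2/3}, b = ε·c, and μ = max{ (9/8)·X², (b + X²)²/(8X²) }. If V ≤ T·√2·Y²·d·X / μ^{3/2}, then L_T(LASER) ≤ b‖u_1‖² + 3·(√2·Y²·d·X)^{2/3}·T^{2/3}·V^{1/3} + (ε/(1−ε))·Y²·d + L_T({u_t}) + Y²·ln det((1/b)·D_T), where L_T({u_t}) = Σ_{t=1}^{T} (y_t − u_tᵀ x_t)². -/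
open Matrix Finset

/-- `e₀ = 0`, `e_t = (I + c⁻¹ D_{t-1})⁻¹ e_{t-1} + y_t x_t` for `t ≥ 1`. -/
noncomputable def evec (d : ℕ) (b c : ℝ) (x : ℕ → Fin d → ℝ) (y : ℕ → ℝ) :
    ℕ → Fin d → ℝ
  | 0 => 0
  | (t + 1) => (1 + c⁻¹ • Dmat d b c x t)⁻¹ *ᵥ evec d b c x y t + y (t + 1) • x (t + 1)

/-- LASER prediction at round `t + 1`:
`ŷ_{t+1} = x_{t+1}ᵀ D_{t+1}⁻¹ (I + c⁻¹ D_t)⁻¹ e_t`. -/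
noncomputable def laserPred (d : ℕ) (b c : ℝ) (x : ℕ → Fin d → ℝ) (y : ℕ → ℝ)
    (t : ℕ) : ℝ :=
  x (t + 1) ⬝ᵥ ((Dmat d b c x (t + 1))⁻¹ *ᵥ
    ((1 + c⁻¹ • Dmat d b c x t)⁻¹ *ᵥ evec d b c x y t))

/-- Cumulative squared loss of LASER over `T` rounds. -/
noncomputable def laserLoss (d : ℕ) (b c : ℝ) (x : ℕ → Fin d → ℝ) (y : ℕ → ℝ)
    (T : ℕ) : ℝ :=
  ∑ t ∈ Finset.range T, (y (t + 1) - laserPred d b c x y t) ^ 2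

lemma le_of_sq_aux {p q : ℝ} (h : p ^ 2 ≤ q ^ 2) (hq : 0 ≤ q) : p ≤ q :=
  (abs_le.1 (abs_le_of_sq_le_sq h hq)).2

lemma aux_symm {d : ℕ} {A : Matrix (Fin d) (Fin d) ℝ} (hA : A.PosDef) (v w : Fin d → ℝ) :
    v ⬝ᵥ (A *ᵥ w) = w ⬝ᵥ (A *ᵥ v) := by
  have h : Aᵀ = A := (conjTranspose_eq_transpose_of_trivial A).symm.trans hA.isHermitian
  rw [dotProduct_mulVec, ← mulVec_transpose, h, dotProduct_comm]

lemma aux_nonneg {d : ℕ} {A : Matrix (Fin d) (Fin d) ℝ} (hA : A.PosDef) (v : Fin d → ℝ) :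
    0 ≤ v ⬝ᵥ (A *ᵥ v) := by
  simpa using hA.posSemidef.dotProduct_mulVec_nonneg v

lemma aux_mulinv {d : ℕ} {A : Matrix (Fin d) (Fin d) ℝ} (hA : A.PosDef) (v : Fin d → ℝ) :
    A *ᵥ (A⁻¹ *ᵥ v) = v := by
  rw [mulVec_mulVec, mul_nonsing_inv _ hA.det_pos.ne'.isUnit, one_mulVec]

lemma aux_invmul {d : ℕ} {A : Matrix (Fin d) (Fin d) ℝ} (hA : A.PosDef) (v : Fin d → ℝ) :
    A⁻¹ *ᵥ (A *ᵥ v) = v := by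
  rw [mulVec_mulVec, nonsing_inv_mul _ hA.det_pos.ne'.isUnit, one_mulVec]

lemma aux_vmv {d : ℕ} (x v : Fin d → ℝ) : vecMulVec x x *ᵥ v = (x ⬝ᵥ v) • x := by
  rw [vecMulVec_mulVec]; ext i; simp [mul_comm]

lemma aux_posB {d : ℕ} {D : Matrix (Fin d) (Fin d) ℝ} (hD : D.PosDef) {c : ℝ} (hc : 0 < c) :
    (D⁻¹ + c⁻¹ • (1 : Matrix (Fin d) (Fin d) ℝ))⁻¹.PosDef :=
  (hD.inv.add (PosDef.one.smul (inv_pos.2 hc))).inv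

lemma aux_posA {d : ℕ} {B : Matrix (Fin d) (Fin d) ℝ} (hB : B.PosDef) (x : Fin d → ℝ) :
    (B + vecMulVec x x).PosDef := by
  have h := posSemidef_vecMulVec_self_star x
  simp only [star_trivial] at h
  exact hB.add_posSemidef h

lemma aux_posG {d : ℕ} {D : Matrix (Fin d) (Fin d) ℝ} (hD : D.PosDef) {c : ℝ} (hc : 0 < c) :
    (1 + c⁻¹ • D).PosDef := PosDef.one.add (hD.smul (inv_pos.2 hc))

lemma half_step {d : ℕ} {D : Matrix (Fin d) (Fin d) ℝ} (hD : D.PosDef) {c : ℝ} (hc : 0 < c)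
    (v w : Fin d → ℝ) :
    v ⬝ᵥ ((D⁻¹ + c⁻¹ • (1 : Matrix (Fin d) (Fin d) ℝ))⁻¹ *ᵥ v)
      ≤ w ⬝ᵥ (D *ᵥ w) + c * ((v - w) ⬝ᵥ (v - w)) := by
  have hS : (D⁻¹ + c⁻¹ • (1 : Matrix (Fin d) (Fin d) ℝ)).PosDef :=
    hD.inv.add (PosDef.one.smul (inv_pos.2 hc))
  set z := (D⁻¹ + c⁻¹ • (1 : Matrix (Fin d) (Fin d) ℝ))⁻¹ *ᵥ v with hz
  have hv : v = D⁻¹ *ᵥ z + c⁻¹ • z := by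
    have := aux_mulinv hS v
    rw [← hz, add_mulVec, smul_mulVec, one_mulVec] at this
    exact this.symm
  set r := D⁻¹ *ᵥ z with hr
  have hDr : D *ᵥ r = z := aux_mulinv hD z
  obtain ⟨k, hk⟩ : ∃ k, w = r + k := ⟨w - r, by abel⟩
  have h1 : v - w = c⁻¹ • z - k := by rw [hv, hk]; abel
  have h2 := aux_nonneg hD k
  have h3 : 0 ≤ k ⬝ᵥ k := by simpa using dotProduct_star_self_nonneg k
  have h4 : r ⬝ᵥ (D *ᵥ k) = k ⬝ᵥ z := by rw [aux_symm hD, hDr]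
  have e1 : w ⬝ᵥ (D *ᵥ w) = r ⬝ᵥ z + 2 * (k ⬝ᵥ z) + k ⬝ᵥ (D *ᵥ k) := by
    rw [hk, mulVec_add, hDr]
    simp only [add_dotProduct, dotProduct_add, h4]; ring
  have e2 : c * ((v - w) ⬝ᵥ (v - w)) = c⁻¹ * (z ⬝ᵥ z) - 2 * (k ⬝ᵥ z) + c * (k ⬝ᵥ k) := by
    rw [h1]
    simp only [sub_dotProduct, dotProduct_sub, smul_dotProduct, dotProduct_smul, smul_eq_mul,
      dotProduct_comm z k]
    field_simp; ring
  have e3 : v ⬝ᵥ z = r ⬝ᵥ z + c⁻¹ * (z ⬝ᵥ z) := by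
    conv_lhs => rw [hv]
    simp only [add_dotProduct, smul_dotProduct, smul_eq_mul]
  rw [e1, e2, e3]
  nlinarith [mul_nonneg hc.le h3]

lemma full_step {d : ℕ} {B : Matrix (Fin d) (Fin d) ℝ} (hB : B.PosDef) (x m g u : Fin d → ℝ)
    (hm : B *ᵥ m = g) (y : ℝ) :
    (y - x ⬝ᵥ ((B + vecMulVec x x)⁻¹ *ᵥ g)) ^ 2
      + (u - (B + vecMulVec x x)⁻¹ *ᵥ (g + y • x)) ⬝ᵥ
        ((B + vecMulVec x x) *ᵥ (u - (B + vecMulVec x x)⁻¹ *ᵥ (g + y • x)))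
      ≤ (u - m) ⬝ᵥ (B *ᵥ (u - m)) + (y - u ⬝ᵥ x) ^ 2
        + y ^ 2 * (x ⬝ᵥ ((B + vecMulVec x x)⁻¹ *ᵥ x)) := by
  have hA := aux_posA hB x
  set A := B + vecMulVec x x with hAdef
  have hAv : ∀ v, A *ᵥ v = B *ᵥ v + (x ⬝ᵥ v) • x := fun v => by
    rw [hAdef, add_mulVec, aux_vmv]
  set h := A⁻¹ *ᵥ g with hh
  set k := A⁻¹ *ᵥ x with hk
  set q := B⁻¹ *ᵥ x with hq
  have hAh : A *ᵥ h = g := aux_mulinv hA g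
  have hAk : A *ᵥ k = x := aux_mulinv hA x
  have hBq : B *ᵥ q = x := aux_mulinv hB x
  have hmh : m = h + (x ⬝ᵥ h) • q := by
    have : B *ᵥ m = B *ᵥ (h + (x ⬝ᵥ h) • q) := by
      rw [hm, mulVec_add, mulVec_smul, hBq, ← hAv, hAh]
    have := congrArg (fun v => B⁻¹ *ᵥ v) this
    simpa only [aux_invmul hB] using this
  have hs : 0 ≤ x ⬝ᵥ q := by
    have := aux_nonneg hB q
    rwa [hBq, dotProduct_comm] at this
  have a1 : h ⬝ᵥ (A *ᵥ u) = u ⬝ᵥ g := by rw [aux_symm hA, hAh]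
  have a2 : k ⬝ᵥ (A *ᵥ u) = u ⬝ᵥ x := by rw [aux_symm hA, hAk]
  have a3 : k ⬝ᵥ g = x ⬝ᵥ h := by
    rw [← hAh, aux_symm hA, hAk, dotProduct_comm]
  have a4 : u ⬝ᵥ (A *ᵥ u) = u ⬝ᵥ (B *ᵥ u) + (u ⬝ᵥ x) ^ 2 := by
    rw [hAv, dotProduct_add, dotProduct_smul, smul_eq_mul, dotProduct_comm x u]; ring
  have a5 : m ⬝ᵥ (B *ᵥ u) = u ⬝ᵥ g := by rw [aux_symm hB, hm]
  have a6 : q ⬝ᵥ g = x ⬝ᵥ h + (x ⬝ᵥ h) * (x ⬝ᵥ q) := by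
    rw [← hm, aux_symm hB, hBq, hmh, add_dotProduct, smul_dotProduct, smul_eq_mul,
      dotProduct_comm h x, dotProduct_comm q x]
  have a7 : m ⬝ᵥ g = h ⬝ᵥ g + (x ⬝ᵥ h) * (x ⬝ᵥ h + (x ⬝ᵥ h) * (x ⬝ᵥ q)) := by
    rw [← a6]; nth_rewrite 1 [hmh]
    rw [add_dotProduct, smul_dotProduct, smul_eq_mul]
  have e1 : A⁻¹ *ᵥ (g + y • x) = h + y • k := by rw [mulVec_add, mulVec_smul]
  rw [e1]
  have e2 : A *ᵥ (u - (h + y • k)) = A *ᵥ u - (g + y • x) := by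
    rw [mulVec_sub, mulVec_add, mulVec_smul, hAh, hAk]
  rw [e2, mulVec_sub, hm]
  simp only [sub_dotProduct, add_dotProduct, dotProduct_sub, dotProduct_add, smul_dotProduct,
    dotProduct_smul, smul_eq_mul, a1, a2, a3, a4, a5, a7, dotProduct_comm h x,
    dotProduct_comm k x]
  nlinarith [mul_nonneg (sq_nonneg (x ⬝ᵥ h)) hs]

lemma log_step {d : ℕ} {B : Matrix (Fin d) (Fin d) ℝ} (hB : B.PosDef) (x : Fin d → ℝ) :
    x ⬝ᵥ ((B + vecMulVec x x)⁻¹ *ᵥ x)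
      ≤ Real.log (B + vecMulVec x x).det - Real.log B.det := by
  have hA := aux_posA hB x
  set A := B + vecMulVec x x with hAdef
  have h1 : B.det = A.det * (1 - x ⬝ᵥ (A⁻¹ *ᵥ x)) := by
    have h := det_add_replicateCol_mul_replicateRow (ι := Unit) hA.det_pos.ne'.isUnit (-x) x
    rw [← vecMulVec_eq] at h
    have e : A + vecMulVec (-x) x = B := by rw [hAdef, neg_vecMulVec]; abel
    rw [e] at h
    rw [h]; congr 1
    rw [det_unique, Matrix.mul_assoc, ← replicateCol_mulVec, replicateRow_mul_replicateCol]
    simp [mulVec_neg, sub_eq_add_neg]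
  have hBp := hB.det_pos
  have hAp := hA.det_pos
  have h2 : 0 < 1 - x ⬝ᵥ (A⁻¹ *ᵥ x) := by
    by_contra hn
    nlinarith [mul_nonneg hAp.le (neg_nonneg.2 (not_lt.1 hn))]
  rw [h1, Real.log_mul hAp.ne' h2.ne']
  linarith [Real.log_le_sub_one_of_pos h2]

lemma logdet_le {d : ℕ} {N : Matrix (Fin d) (Fin d) ℝ} (hN : N.PosDef) :
    Real.log N.det ≤ N.trace - d := by
  rw [hN.isHermitian.det_eq_prod_eigenvalues, hN.isHermitian.trace_eq_sum_eigenvalues]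
  simp only [RCLike.ofReal_real_eq_id, id]
  rw [Real.log_prod (fun i _ => (hN.eigenvalues_pos i).ne')]
  have : ∀ i ∈ (Finset.univ : Finset (Fin d)), Real.log (hN.isHermitian.eigenvalues i)
      ≤ hN.isHermitian.eigenvalues i - 1 := fun i _ =>
    Real.log_le_sub_one_of_pos (hN.eigenvalues_pos i)
  refine (Finset.sum_le_sum this).trans ?_
  simp [Finset.sum_sub_distrib]

lemma B_mul {d : ℕ} {D : Matrix (Fin d) (Fin d) ℝ} (hD : D.PosDef) {c : ℝ} (hc : 0 < c) :
    (D⁻¹ + c⁻¹ • (1 : Matrix (Fin d) (Fin d) ℝ))⁻¹ = (1 + c⁻¹ • D)⁻¹ * D := by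
  have hG := aux_posG hD hc
  have hDu := hD.det_pos.ne'.isUnit
  apply inv_eq_left_inv
  rw [Matrix.mul_assoc, Matrix.mul_add, mul_nonsing_inv _ hDu, Matrix.mul_smul, Matrix.mul_one,
    nonsing_inv_mul _ hG.det_pos.ne'.isUnit]

lemma logdet_B {d : ℕ} {D : Matrix (Fin d) (Fin d) ℝ} (hD : D.PosDef) {c M : ℝ} (hc : 0 < c)
    (hM : ∀ v, v ⬝ᵥ (D *ᵥ v) ≤ M * (v ⬝ᵥ v)) :
    Real.log D.det - d * M / c
      ≤ Real.log (D⁻¹ + c⁻¹ • (1 : Matrix (Fin d) (Fin d) ℝ))⁻¹.det := by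
  have hG := aux_posG hD hc
  have hGp := hG.det_pos
  rw [B_mul hD hc, det_mul, det_nonsing_inv, Ring.inverse_eq_inv',
    Real.log_mul (inv_ne_zero hGp.ne') hD.det_pos.ne', Real.log_inv]
  have h := logdet_le hG
  have ht : D.trace ≤ d * M := by
    have : ∀ i ∈ (Finset.univ : Finset (Fin d)), D i i ≤ M := fun i _ => by
      simpa using hM (Pi.single i 1)
    have := Finset.sum_le_sum this
    simpa [Matrix.trace] using this
  have : (1 + c⁻¹ • D).trace = d + c⁻¹ * D.trace := by simp [trace_add, trace_smul]
  rw [this] at h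
  have : c⁻¹ * D.trace ≤ c⁻¹ * (d * M) := by gcongr
  have e : c⁻¹ * (d * M) = d * M / c := by ring
  linarith

lemma bound_step {d : ℕ} {D : Matrix (Fin d) (Fin d) ℝ} (hD : D.PosDef) {c M X : ℝ} (hc : 0 < c)
    (hM0 : 0 < M) (hM : ∀ v, v ⬝ᵥ (D *ᵥ v) ≤ M * (v ⬝ᵥ v)) (v : Fin d → ℝ)
    (hX : X ^ 2 * (M + c) ≤ M ^ 2) :
    v ⬝ᵥ ((D⁻¹ + c⁻¹ • (1 : Matrix (Fin d) (Fin d) ℝ))⁻¹ *ᵥ v) ≤ (M - X ^ 2) * (v ⬝ᵥ v) := by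
  have h := half_step hD hc v ((c / (M + c)) • v)
  have h2 := hM ((c / (M + c)) • v)
  have h3 : 0 ≤ v ⬝ᵥ v := by simpa using dotProduct_star_self_nonneg v
  have e : v - (c / (M + c)) • v = (M / (M + c)) • v := by
    have : M / (M + c) = 1 - c / (M + c) := by field_simp; ring
    rw [this, sub_smul, one_smul]
  rw [e] at h
  simp only [smul_dotProduct, dotProduct_smul, smul_eq_mul] at h h2
  have h4 : M * (c / (M + c) * (c / (M + c) * (v ⬝ᵥ v)))
      + c * (M / (M + c) * (M / (M + c) * (v ⬝ᵥ v))) = (M * c / (M + c)) * (v ⬝ᵥ v) := by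
    field_simp; ring
  have h5 : M * c / (M + c) ≤ M - X ^ 2 := by
    rw [div_le_iff₀ (by positivity)]; nlinarith
  nlinarith [mul_le_mul_of_nonneg_right h5 h3]

lemma cs_bound {d : ℕ} (x v : Fin d → ℝ) {X : ℝ} (hx : x ⬝ᵥ x ≤ X ^ 2) :
    (x ⬝ᵥ v) ^ 2 ≤ X ^ 2 * (v ⬝ᵥ v) := by
  have h3 : 0 ≤ v ⬝ᵥ v := by simpa using dotProduct_star_self_nonneg v
  have := Finset.sum_mul_sq_le_sq_mul_sq Finset.univ x v
  have e : (x ⬝ᵥ v) ^ 2 ≤ (x ⬝ᵥ x) * (v ⬝ᵥ v) := by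
    simpa only [dotProduct, ← sq] using this
  nlinarith [mul_le_mul_of_nonneg_right hx h3]

lemma bound_A {d : ℕ} {B : Matrix (Fin d) (Fin d) ℝ} {M X : ℝ} (x v : Fin d → ℝ)
    (hx : x ⬝ᵥ x ≤ X ^ 2)
    (hB : v ⬝ᵥ (B *ᵥ v) ≤ (M - X ^ 2) * (v ⬝ᵥ v)) :
    v ⬝ᵥ ((B + vecMulVec x x) *ᵥ v) ≤ M * (v ⬝ᵥ v) := by
  rw [add_mulVec, aux_vmv, dotProduct_add, dotProduct_smul, smul_eq_mul, dotProduct_comm v x]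
  nlinarith [cs_bound x v hx]

lemma B_zero {d : ℕ} {b c : ℝ} (hb : 0 < b) (hbc : b < c) :
    (((b * c / (c - b)) • (1 : Matrix (Fin d) (Fin d) ℝ))⁻¹
      + c⁻¹ • (1 : Matrix (Fin d) (Fin d) ℝ))⁻¹ = b • 1 := by
  have hc : 0 < c := hb.trans hbc
  have hcb : c - b ≠ 0 := by linarith
  have h1 : ((b * c / (c - b)) • (1 : Matrix (Fin d) (Fin d) ℝ))⁻¹ = ((c - b) / (b * c)) • 1 := by
    apply inv_eq_left_inv
    rw [smul_mul_smul_comm, Matrix.one_mul]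
    have : (c - b) / (b * c) * (b * c / (c - b)) = 1 := by field_simp
    rw [this, one_smul]
  rw [h1, ← add_smul]
  apply inv_eq_left_inv
  rw [smul_mul_smul_comm, Matrix.one_mul]
  have : b * ((c - b) / (b * c) + c⁻¹) = 1 := by field_simp; ring
  rw [this, one_smul]

lemma Dpos {d : ℕ} {b c : ℝ} (hb : 0 < b) (hbc : b < c) (x : ℕ → Fin d → ℝ) (t : ℕ) :
    (Dmat d b c x t).PosDef := by
  have hc : 0 < c := hb.trans hbc
  induction t with
  | zero => exact PosDef.one.smul (div_pos (mul_pos hb hc) (by linarith))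
  | succ t ih => exact aux_posA (aux_posB ih hc) _

lemma Dbound {d : ℕ} {b c M X : ℝ} (hb : 0 < b) (hbc : b < c) (x : ℕ → Fin d → ℝ)
    (hx : ∀ t : ℕ, x (t + 1) ⬝ᵥ x (t + 1) ≤ X ^ 2) (hM0 : 0 < M)
    (hbM : b + X ^ 2 ≤ M) (hX : X ^ 2 * (M + c) ≤ M ^ 2) (t : ℕ) :
    ∀ v, v ⬝ᵥ (Dmat d b c x (t + 1) *ᵥ v) ≤ M * (v ⬝ᵥ v) := by
  have hc : 0 < c := hb.trans hbc
  induction t with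
  | zero =>
    intro v
    refine bound_A (X := X) _ _ (hx 0) ?_
    rw [Dmat, B_zero hb hbc, smul_mulVec, one_mulVec, dotProduct_smul, smul_eq_mul]
    have h3 : 0 ≤ v ⬝ᵥ v := by simpa using dotProduct_star_self_nonneg v
    nlinarith
  | succ t ih =>
    intro v
    exact bound_A (X := X) _ _ (hx (t + 1)) (bound_step (Dpos hb hbc x _) hc hM0 ih v hX)

lemma one_step {d : ℕ} {b c Y : ℝ} (hb : 0 < b) (hbc : b < c) (x : ℕ → Fin d → ℝ) (y : ℕ → ℝ)
    (hy : ∀ t : ℕ, |y (t + 1)| ≤ Y) (t : ℕ) (u : Fin d → ℝ) :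
    (y (t + 1) - laserPred d b c x y t) ^ 2
      + (u - (Dmat d b c x (t + 1))⁻¹ *ᵥ evec d b c x y (t + 1)) ⬝ᵥ (Dmat d b c x (t + 1) *ᵥ
          (u - (Dmat d b c x (t + 1))⁻¹ *ᵥ evec d b c x y (t + 1)))
      ≤ (u - (Dmat d b c x t)⁻¹ *ᵥ evec d b c x y t) ⬝ᵥ
          (((Dmat d b c x t)⁻¹ + c⁻¹ • (1 : Matrix (Fin d) (Fin d) ℝ))⁻¹ *ᵥ
            (u - (Dmat d b c x t)⁻¹ *ᵥ evec d b c x y t))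
        + (y (t + 1) - u ⬝ᵥ x (t + 1)) ^ 2
        + Y ^ 2 * (Real.log (Dmat d b c x (t + 1)).det - Real.log
            (((Dmat d b c x t)⁻¹ + c⁻¹ • (1 : Matrix (Fin d) (Fin d) ℝ))⁻¹).det) := by
  have hc : 0 < c := hb.trans hbc
  have hD := Dpos hb hbc x t
  have hB := aux_posB hD hc
  have hm : ((Dmat d b c x t)⁻¹ + c⁻¹ • (1 : Matrix (Fin d) (Fin d) ℝ))⁻¹ *ᵥ
      ((Dmat d b c x t)⁻¹ *ᵥ evec d b c x y t)
      = (1 + c⁻¹ • Dmat d b c x t)⁻¹ *ᵥ evec d b c x y t := by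
    rw [B_mul hD hc, ← mulVec_mulVec, aux_mulinv hD]
  have h1 := full_step hB (x (t + 1)) _ _ u hm (y (t + 1))
  have h2 := log_step hB (x (t + 1))
  have h3 : 0 ≤ x (t + 1) ⬝ᵥ ((((Dmat d b c x t)⁻¹ + c⁻¹ • (1 : Matrix (Fin d) (Fin d) ℝ))⁻¹ +
      vecMulVec (x (t + 1)) (x (t + 1)))⁻¹ *ᵥ x (t + 1)) :=
    aux_nonneg (aux_posA hB _).inv _
  have h4 : y (t + 1) ^ 2 ≤ Y ^ 2 := sq_le_sq' (abs_le.1 (hy t)).1 (abs_le.1 (hy t)).2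
  refine h1.trans ?_
  have h5 := mul_le_mul h4 h2 h3 (sq_nonneg Y)
  exact add_le_add le_rfl h5

lemma main_ind {d : ℕ} {b c M X Y : ℝ} (hb : 0 < b) (hbc : b < c) (x : ℕ → Fin d → ℝ)
    (y : ℕ → ℝ) (hy : ∀ t : ℕ, |y (t + 1)| ≤ Y)
    (hx : ∀ t : ℕ, x (t + 1) ⬝ᵥ x (t + 1) ≤ X ^ 2) (hM0 : 0 < M)
    (hbM : b + X ^ 2 ≤ M) (hX : X ^ 2 * (M + c) ≤ M ^ 2) (u : ℕ → Fin d → ℝ) (t : ℕ) :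
    laserLoss d b c x y (t + 1)
      + (u (t + 1) - (Dmat d b c x (t + 1))⁻¹ *ᵥ evec d b c x y (t + 1)) ⬝ᵥ
        (Dmat d b c x (t + 1) *ᵥ
          (u (t + 1) - (Dmat d b c x (t + 1))⁻¹ *ᵥ evec d b c x y (t + 1)))
      ≤ b * (u 1 ⬝ᵥ u 1)
        + c * ∑ s ∈ Finset.range t, (u (s + 2) - u (s + 1)) ⬝ᵥ (u (s + 2) - u (s + 1))
        + ∑ s ∈ Finset.range (t + 1), (y (s + 1) - u (s + 1) ⬝ᵥ x (s + 1)) ^ 2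
        + Y ^ 2 * (Real.log (Dmat d b c x (t + 1)).det - d * Real.log b + t * (d * M / c)) := by
  have hc : 0 < c := hb.trans hbc
  induction t with
  | zero =>
    have h := one_step hb hbc x y hy 0 (u 1)
    have e : evec d b c x y 0 = 0 := rfl
    have e2 : ((Dmat d b c x 0)⁻¹ + c⁻¹ • (1 : Matrix (Fin d) (Fin d) ℝ))⁻¹ = b • 1 :=
      B_zero hb hbc
    rw [e2, e, mulVec_zero, sub_zero, smul_mulVec, one_mulVec, dotProduct_smul, smul_eq_mul,
      det_smul, det_one, mul_one, Fintype.card_fin, Real.log_pow] at h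
    simp only [laserLoss, Finset.sum_range_succ, Finset.sum_range_zero, zero_add, Nat.cast_zero,
      zero_mul, add_zero, mul_zero] at h ⊢
    linarith
  | succ t ih =>
    have h := one_step hb hbc x y hy (t + 1) (u (t + 2))
    have h2 := half_step (Dpos hb hbc x (t + 1)) hc
      (u (t + 2) - (Dmat d b c x (t + 1))⁻¹ *ᵥ evec d b c x y (t + 1))
      (u (t + 1) - (Dmat d b c x (t + 1))⁻¹ *ᵥ evec d b c x y (t + 1))
    rw [sub_sub_sub_cancel_right] at h2
    have h3 := mul_le_mul_of_nonneg_left (logdet_B (Dpos hb hbc x (t + 1)) hc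
      (Dbound hb hbc x hx hM0 hbM hX t)) (sq_nonneg Y)
    have e1 : laserLoss d b c x y (t + 1 + 1) = laserLoss d b c x y (t + 1)
        + (y (t + 1 + 1) - laserPred d b c x y (t + 1)) ^ 2 := by
      simp only [laserLoss]; rw [Finset.sum_range_succ]
    rw [e1, Finset.sum_range_succ _ t, Finset.sum_range_succ _ (t + 1)]
    push_cast
    change _ + _ + (u (t + 2) - _) ⬝ᵥ _ ≤ _
    simp only [show t + 1 + 1 = t + 2 from rfl] at *
    linarith

theorem laser_regret_low_drift (d : ℕ) (hd : 1 ≤ d)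
    (x : ℕ → Fin d → ℝ) (y : ℕ → ℝ) (X Y : ℝ) (hX : 0 < X)
    (hx : ∀ t : ℕ, x (t + 1) ⬝ᵥ x (t + 1) ≤ X ^ 2)
    (hy : ∀ t : ℕ, |y (t + 1)| ≤ Y)
    (T : ℕ) (hT : 1 ≤ T) (u : ℕ → Fin d → ℝ) (V : ℝ)
    (hV : V = ∑ t ∈ Finset.range (T - 1),
        (u (t + 2) - u (t + 1)) ⬝ᵥ (u (t + 2) - u (t + 1)))
    (hVpos : 0 < V)
    (ε : ℝ) (hε0 : 0 < ε) (hε1 : ε < 1)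
    (b c μ : ℝ)
    (hc : c = (Real.sqrt 2 * T * Y ^ 2 * d * X / V) ^ ((2 : ℝ) / 3))
    (hb : b = ε * c)
    (hμ : μ = max ((9 / 8) * X ^ 2) ((b + X ^ 2) ^ 2 / (8 * X ^ 2)))
    (hlow : V ≤ T * (Real.sqrt 2 * Y ^ 2 * d * X) / μ ^ ((3 : ℝ) / 2)) :
    laserLoss d b c x y T ≤
      b * (u 1 ⬝ᵥ u 1)
        + 3 * (Real.sqrt 2 * Y ^ 2 * d * X) ^ ((2 : ℝ) / 3)
            * (T : ℝ) ^ ((2 : ℝ) / 3) * V ^ ((1 : ℝ) / 3)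
        + (ε / (1 - ε)) * Y ^ 2 * d
        + ∑ t ∈ Finset.range T, (y (t + 1) - u (t + 1) ⬝ᵥ x (t + 1)) ^ 2
        + Y ^ 2 * Real.log ((b⁻¹ • Dmat d b c x T).det) := by
  have hX2 : 0 < X ^ 2 := by positivity
  have hT0 : (0 : ℝ) < T := by exact_mod_cast hT
  have hd0 : (0 : ℝ) < d := by exact_mod_cast hd
  have hs2 : 0 < Real.sqrt 2 := by positivity
  have hμ1 : 9 / 8 * X ^ 2 ≤ μ := hμ ▸ le_max_left _ _
  have hμ2 : (b + X ^ 2) ^ 2 / (8 * X ^ 2) ≤ μ := hμ ▸ le_max_right _ _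
  have hμ0 : 0 < μ := by linarith
  have hY : 0 < Y ^ 2 := by
    rcases (sq_nonneg Y).lt_or_eq with h | h
    · exact h
    · rw [← h] at hlow; simp at hlow; linarith
  set a := T * (Real.sqrt 2 * Y ^ 2 * d * X) with ha
  have ha0 : 0 < a := by positivity
  have hc' : c = (a / V) ^ ((2 : ℝ) / 3) := by rw [hc, ha]; congr 2; ring
  have haV : 0 < a / V := by positivity
  have hc0 : 0 < c := by rw [hc']; positivity
  have hμc : μ ≤ c := by
    have h1 : μ ^ ((3 : ℝ) / 2) ≤ a / V := by
      rw [le_div_iff₀ (by positivity)] at hlow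
      rw [le_div_iff₀ hVpos]; linarith
    have h2 := Real.rpow_le_rpow (by positivity) h1 (by norm_num : (0 : ℝ) ≤ 2 / 3)
    rwa [← Real.rpow_mul hμ0.le, ← hc', show (3 : ℝ) / 2 * (2 / 3) = 1 by norm_num,
      Real.rpow_one] at h2
  have hb0 : 0 < b := by rw [hb]; positivity
  have hbc : b < c := by rw [hb]; nlinarith
  set M := 2 * Real.sqrt 2 * X * Real.sqrt c with hM
  have hM0 : 0 < M := by positivity
  have hMsq : M ^ 2 = 8 * X ^ 2 * c := by
    rw [hM]; simp only [mul_pow]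
    rw [Real.sq_sqrt (by norm_num), Real.sq_sqrt hc0.le]; ring
  have hbM : b + X ^ 2 ≤ M := by
    refine le_of_sq_aux ?_ hM0.le
    rw [hMsq]
    have := hμ2.trans hμc
    rw [div_le_iff₀ (by positivity)] at this
    linarith
  have hM7 : M ≤ 7 * c := by
    refine le_of_sq_aux ?_ (by positivity)
    rw [hMsq]
    have h8 := mul_le_mul_of_nonneg_right (hμ1.trans hμc) hc0.le
    nlinarith [mul_pos hc0 hc0]
  have hXM : X ^ 2 * (M + c) ≤ M ^ 2 := by
    rw [hMsq]
    have h8 := mul_le_mul_of_nonneg_left hM7 hX2.le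
    linarith
  have key := main_ind hb0 hbc x y hy hx hM0 hbM hXM u (T - 1)
  rw [Nat.sub_add_cancel hT, ← hV] at key
  have hW := aux_nonneg (Dpos hb0 hbc x T) (u T - (Dmat d b c x T)⁻¹ *ᵥ evec d b c x y T)
  have hdet : Real.log ((b⁻¹ • Dmat d b c x T).det)
      = Real.log (Dmat d b c x T).det - d * Real.log b := by
    rw [det_smul, Fintype.card_fin, Real.log_mul (by positivity) (Dpos hb0 hbc x T).det_pos.ne',
      Real.log_pow, Real.log_inv]; ring
  have hTm : ((T - 1 : ℕ) : ℝ) * (d * M / c) ≤ T * (d * M / c) := by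
    have : ((T - 1 : ℕ) : ℝ) ≤ T := by exact_mod_cast Nat.sub_le _ _
    gcongr
  have hcV : c * V = a ^ ((2 : ℝ) / 3) * V ^ ((1 : ℝ) / 3) := by
    rw [hc', Real.div_rpow ha0.le hVpos.le]
    have : V = V ^ ((2 : ℝ) / 3) * V ^ ((1 : ℝ) / 3) := by
      rw [← Real.rpow_add hVpos]; norm_num
    have h0 : 0 < V ^ ((2 : ℝ) / 3) := by positivity
    nth_rewrite 2 [this]
    field_simp
  have hsc : Real.sqrt c ^ 2 = c := Real.sq_sqrt hc0.le
  have hsc0 : 0 < Real.sqrt c := by positivity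
  have haeq : a = c * Real.sqrt c * V := by
    have h1 : Real.sqrt c = (a / V) ^ ((1 : ℝ) / 3) := by
      rw [Real.sqrt_eq_rpow, hc', ← Real.rpow_mul haV.le]; norm_num
    have h2 : c * Real.sqrt c = a / V := by
      rw [h1, hc', ← Real.rpow_add haV]; norm_num
    rw [h2]; field_simp
  have hT2 : Y ^ 2 * (T * (d * M / c)) = 2 * (c * V) := by
    have : Y ^ 2 * (T * (d * M / c)) = 2 * a * Real.sqrt c / c := by
      rw [hM, ha]; field_simp
    rw [this, haeq]
    field_simp
    linear_combination hsc
  have haa : a ^ ((2 : ℝ) / 3) = (Real.sqrt 2 * Y ^ 2 * d * X) ^ ((2 : ℝ) / 3)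
            * (T : ℝ) ^ ((2 : ℝ) / 3) := by
    rw [ha, Real.mul_rpow hT0.le (by positivity), mul_comm]
  have h3 : 3 * (Real.sqrt 2 * Y ^ 2 * d * X) ^ ((2 : ℝ) / 3)
            * (T : ℝ) ^ ((2 : ℝ) / 3) * V ^ ((1 : ℝ) / 3) = 3 * (c * V) := by
    rw [hcV, haa]; ring
  rw [h3, hdet]
  have h4 : 0 ≤ (ε / (1 - ε)) * Y ^ 2 * d := by
    have : 0 < 1 - ε := by linarith
    positivity
  have h5 := mul_le_mul_of_nonneg_left hTm hY.le
  linarith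
end
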